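/- Let A = K(H). The quasi-centralizers of F(H) correspond bijectively to sesquilinear forms f : H × H → ℂ via T(v₁ ⊗ w̄₁, v₂ ⊗ w̄₂) = f(v₂, w₁) · (v₁ ⊗ w̄₂). -/

import Mathlib

/-!
A form `f` and its quasi-centralizer `T` determine each other through the weak identity
`⟨z, T(x, y) u⟩ = f(y u, x* z)`; formally, `T(x, y) = x F y` for the possibly unbounded `F`
representing `f`.

For a quasi-centralizer `T`, the two module identities give
`(a ⊗ z̄) T(x, y) (u ⊗ b̄) = T(a ⊗ (x* z)‾, y u ⊗ b̄)` (`sandwich`), so `T` is determined by its values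
on pairs of rank-one operators, and `inner_apply_eq` is the weak identity. Taking `x = e ⊗ w̄`,
`y = v ⊗ ē` with a unit vector `e` yields the form `f(v, w) = ⟨e, T(e ⊗ w̄, v ⊗ ē) e⟩`
(`exists_form`).

Conversely, given `f`, the weak identity defines a bounded operator `T(x, y)` because `f` is only
evaluated on finite-dimensional spaces (`exists_op`); bilinearity, the module identities and the
finite rank of `T(x, y)` are then all read off from the weak identity.
-/

open scoped ComplexOrder

noncomputable section

variable {H : Type*} [NormedAddCommGroup H] [InnerProductSpace ℂ H] [CompleteSpace H]

/-- The subspace `F(H)` of bounded finite-rank operators on `H`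
(the Pedersen ideal of the C*-algebra `K(H)` of compact operators). -/
def FR (H : Type*) [NormedAddCommGroup H] [InnerProductSpace ℂ H] :
    Submodule ℂ (H →L[ℂ] H) where
  carrier := {x | FiniteDimensional ℂ (LinearMap.range (x : H →ₗ[ℂ] H))}
  add_mem' := by
    intro a b ha hb
    simp only [Set.mem_setOf_eq] at *
    haveI := ha; haveI := hb
    haveI : FiniteDimensional ℂ
        ↥(LinearMap.range (a : H →ₗ[ℂ] H) ⊔ LinearMap.range (b : H →ₗ[ℂ] H)) :=
      Submodule.finiteDimensional_sup _ _
    exact Submodule.finiteDimensional_of_le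
      (show LinearMap.range ((a + b : H →L[ℂ] H) : H →ₗ[ℂ] H) ≤
          LinearMap.range (a : H →ₗ[ℂ] H) ⊔ LinearMap.range (b : H →ₗ[ℂ] H) by
        rintro x ⟨u, rfl⟩
        exact Submodule.mem_sup.2 ⟨a u, ⟨u, rfl⟩, b u, ⟨u, rfl⟩, by simp⟩)
  zero_mem' := by
    simp only [Set.mem_setOf_eq]
    exact Submodule.finiteDimensional_of_le (show _ ≤ (⊥ : Submodule ℂ H) by
      rintro x ⟨u, rfl⟩; simp)
  smul_mem' := by
    intro c a ha
    simp only [Set.mem_setOf_eq] at *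
    haveI := ha
    exact Submodule.finiteDimensional_of_le
      (show LinearMap.range ((c • a : H →L[ℂ] H) : H →ₗ[ℂ] H) ≤
          LinearMap.range (a : H →ₗ[ℂ] H) by
        rintro x ⟨u, rfl⟩
        exact ⟨c • u, by simp [map_smul]⟩)

/-- The rank-one operator `v ⊗ w̄ : u ↦ ⟨u, w⟩ v`. -/
noncomputable def rankOne (v w : H) : H →L[ℂ] H := (innerSL ℂ w).smulRight v

/-- `T` is a left centralizer of `F(H)`: it maps `F(H)` into `F(H)` and
`T(xy) = (Tx)y` for all `x, y ∈ F(H)`. -/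
def IsLeftCentralizer (T : FR H →ₗ[ℂ] (H →L[ℂ] H)) : Prop :=
  (∀ x : FR H, T x ∈ FR H) ∧
  ∀ (x y : FR H) (h : (x : H →L[ℂ] H) * (y : H →L[ℂ] H) ∈ FR H),
    T ⟨(x : H →L[ℂ] H) * (y : H →L[ℂ] H), h⟩ = T x * (y : H →L[ℂ] H)

/-- `T` is a quasi-centralizer of `F(H)`: a bilinear map `F(H) × F(H) → F(H)` with
`T(b₁b₂, b₃) = b₁ T(b₂, b₃)` and `T(b₁, b₂b₃) = T(b₁, b₂) b₃`. -/
def IsQuasiCentralizer (T : FR H →ₗ[ℂ] FR H →ₗ[ℂ] (H →L[ℂ] H)) : Prop :=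
  (∀ x y : FR H, T x y ∈ FR H) ∧
  (∀ (b₁ b₂ b₃ : FR H) (h : (b₁ : H →L[ℂ] H) * (b₂ : H →L[ℂ] H) ∈ FR H),
    T ⟨(b₁ : H →L[ℂ] H) * (b₂ : H →L[ℂ] H), h⟩ b₃ = (b₁ : H →L[ℂ] H) * T b₂ b₃) ∧
  (∀ (b₁ b₂ b₃ : FR H) (h : (b₂ : H →L[ℂ] H) * (b₃ : H →L[ℂ] H) ∈ FR H),
    T b₁ ⟨(b₂ : H →L[ℂ] H) * (b₃ : H →L[ℂ] H), h⟩ = T b₁ b₂ * (b₃ : H →L[ℂ] H))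

/-- `f : H × H → ℂ` is a sesquilinear form, linear in the first variable and
conjugate-linear in the second. -/
def IsSesquilinear (f : H → H → ℂ) : Prop :=
  (∀ v v' w, f (v + v') w = f v w + f v' w) ∧
  (∀ (c : ℂ) v w, f (c • v) w = c * f v w) ∧
  (∀ v w w', f v (w + w') = f v w + f v w') ∧
  (∀ (c : ℂ) v w, f v (c • w) = starRingEnd ℂ c * f v w)

lemma rankOne_apply (v w u : H) : rankOne v w u = inner ℂ w u • v := rfl

lemma rankOne_mem (v w : H) : rankOne v w ∈ FR H := by
  change FiniteDimensional ℂ _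
  refine Submodule.finiteDimensional_of_le (S₂ := Submodule.span ℂ {v}) ?_
  rintro _ ⟨u, rfl⟩
  exact Submodule.smul_mem _ _ (Submodule.mem_span_singleton_self v)

lemma mul_rankOne (x : H →L[ℂ] H) (v w : H) : x * rankOne v w = rankOne (x v) w := by
  ext u
  simp [rankOne_apply]

lemma rankOne_mul (x : H →L[ℂ] H) (v w : H) :
    rankOne v w * x = rankOne v (ContinuousLinearMap.adjoint x w) := by
  ext u
  simp [rankOne_apply, ContinuousLinearMap.adjoint_inner_left]

lemma adjoint_rankOne_apply (v w z : H) :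
    ContinuousLinearMap.adjoint (rankOne v w) z = inner ℂ v z • w := by
  refine ext_inner_right ℂ fun u => ?_
  simp [ContinuousLinearMap.adjoint_inner_left, rankOne_apply, inner_smul_left, inner_smul_right,
    mul_comm]

lemma mul_mem_FR_left (x y : H →L[ℂ] H) (hx : x ∈ FR H) : x * y ∈ FR H := by
  change FiniteDimensional ℂ _ at hx
  change FiniteDimensional ℂ _
  refine Submodule.finiteDimensional_of_le (S₂ := LinearMap.range (x : H →ₗ[ℂ] H)) ?_
  rintro _ ⟨u, rfl⟩
  exact ⟨y u, rfl⟩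

/-- Both sides equal `(a ⊗ z̄) T(x, y) (u ⊗ b̄)`: the module identities move the two rank-one factors
inside `T`, where their products with `x` and `y` are again of rank one. -/
lemma sandwich (T : FR H →ₗ[ℂ] FR H →ₗ[ℂ] (H →L[ℂ] H)) (hT : IsQuasiCentralizer T)
    (x y : FR H) (a b z u : H) :
    T ⟨rankOne a (ContinuousLinearMap.adjoint (x : H →L[ℂ] H) z), rankOne_mem _ _⟩
      ⟨rankOne ((y : H →L[ℂ] H) u) b, rankOne_mem _ _⟩
      = inner ℂ z (T x y u) • rankOne a b := by
  have h1 := hT.2.1 ⟨rankOne a z, rankOne_mem _ _⟩ x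
    ⟨(y : H →L[ℂ] H) * rankOne u b, mul_mem_FR_left _ _ y.2⟩ (mul_mem_FR_left _ _ (rankOne_mem _ _))
  have h2 := hT.2.2 x y ⟨rankOne u b, rankOne_mem _ _⟩ (mul_mem_FR_left _ _ y.2)
  simp only [rankOne_mul, mul_rankOne] at h1 h2
  rw [h1, h2]
  ext t
  simp [rankOne_apply, ContinuousLinearMap.adjoint_inner_left, smul_smul, mul_comm]

/-- The weak description `⟨z, T(x, y) u⟩ = f(y u, x* z)` of the quasi-centralizer attached to a
form `f`: formally `T(x, y) = x F y`, where `F` is the possibly unbounded operator of `f`. -/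
lemma inner_apply_eq (f : H → H → ℂ) (hf : IsSesquilinear f)
    (T : FR H →ₗ[ℂ] FR H →ₗ[ℂ] (H →L[ℂ] H)) (hT : IsQuasiCentralizer T)
    (h : ∀ (v₁ w₁ v₂ w₂ : H) (h₁ : rankOne v₁ w₁ ∈ FR H) (h₂ : rankOne v₂ w₂ ∈ FR H),
      T ⟨rankOne v₁ w₁, h₁⟩ ⟨rankOne v₂ w₂, h₂⟩ = f v₂ w₁ • rankOne v₁ w₂)
    (x y : FR H) (z u : H) :
    inner ℂ z (T x y u) =
      f ((y : H →L[ℂ] H) u) (ContinuousLinearMap.adjoint (x : H →L[ℂ] H) z) := by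
  by_cases hu : u = 0
  · have h0 := hf.2.1 0 0 (ContinuousLinearMap.adjoint (x : H →L[ℂ] H) z)
    simp only [zero_smul, zero_mul] at h0
    simp [hu, h0]
  · have h1 := sandwich T hT x y u u z u
    rw [h] at h1
    have h2 := congrArg (fun S : H →L[ℂ] H => S u) h1
    simp only [smul_apply, rankOne_apply, smul_smul] at h2
    have h3 := smul_left_injective ℂ hu h2
    exact (mul_right_cancel₀ (inner_self_ne_zero.2 hu) h3).symm

/-- For finite-rank `x` and `y` there is a bounded operator `S` with `⟨z, S u⟩ = f(y u, x* z)`,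
even though `f` itself need not be bounded: only its restrictions to the finite-dimensional
ranges of `x` and `y` intervene. -/
lemma exists_op (f : H → H → ℂ) (hf : IsSesquilinear f) (x y : FR H) :
    ∃ S : H →L[ℂ] H, ∀ z u, inner ℂ z (S u) =
      f ((y : H →L[ℂ] H) u) (ContinuousLinearMap.adjoint (x : H →L[ℂ] H) z) := by
  obtain ⟨x, hx⟩ := x
  obtain ⟨y, hy⟩ := y
  obtain ⟨f1, f2, f3, f4⟩ := hf
  change FiniteDimensional ℂ (LinearMap.range (x : H →ₗ[ℂ] H)) at hx
  change FiniteDimensional ℂ (LinearMap.range (y : H →ₗ[ℂ] H)) at hy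
  let L : H → (H →L[ℂ] ℂ) := fun w =>
    (LinearMap.toContinuousLinearMap
      ({ toFun := fun v => f (v : H) w
         map_add' := fun a b => f1 a b w
         map_smul' := fun c a => f2 c a w } : LinearMap.range (y : H →ₗ[ℂ] H) →ₗ[ℂ] ℂ)).comp
      (y.codRestrict (LinearMap.range (y : H →ₗ[ℂ] H)) fun u => ⟨u, rfl⟩)
  have hL : ∀ w u, L w u = f (y u) w := fun w u => rfl
  let e := stdOrthonormalBasis ℂ (LinearMap.range (x : H →ₗ[ℂ] H))
  refine ⟨∑ i, (L (ContinuousLinearMap.adjoint x (e i : H))).smulRight (e i : H), fun z u => ?_⟩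
  have key : ContinuousLinearMap.adjoint x z =
      ∑ i, inner ℂ (e i : H) z • ContinuousLinearMap.adjoint x (e i : H) := by
    refine ext_inner_right ℂ fun t => ?_
    have hs := e.sum_repr' ⟨x t, t, rfl⟩
    have hs' := congrArg (fun v : LinearMap.range (x : H →ₗ[ℂ] H) => (v : H)) hs
    simp only [Submodule.coe_sum, Submodule.coe_smul, Submodule.coe_inner] at hs'
    simp only [sum_inner, inner_smul_left, ContinuousLinearMap.adjoint_inner_left]
    conv_lhs => rw [← hs']
    simp [inner_sum, inner_smul_right, mul_comm]
  let g : H →ₗ⋆[ℂ] ℂ :=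
    { toFun := fun w => f (y u) w
      map_add' := fun a b => f3 (y u) a b
      map_smul' := fun c a => f4 c (y u) a }
  change _ = g (ContinuousLinearMap.adjoint x z)
  rw [key, map_sum]
  simp only [sum_apply, inner_sum, ContinuousLinearMap.smulRight_apply, hL,
    inner_smul_right, map_smulₛₗ, inner_conj_symm, smul_eq_mul]
  exact Finset.sum_congr rfl fun i _ => mul_comm _ _

/-- Any unit vector `e` yields the form of `T`, namely `f(v, w) = ⟨e, T(e ⊗ w̄, v ⊗ ē) e⟩`. -/
lemma exists_form (T : FR H →ₗ[ℂ] FR H →ₗ[ℂ] (H →L[ℂ] H)) (hT : IsQuasiCentralizer T)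
    (e : H) (he : ‖e‖ = 1) :
    ∃ f : H → H → ℂ, IsSesquilinear f ∧
      ∀ (v₁ w₁ v₂ w₂ : H) (h₁ : rankOne v₁ w₁ ∈ FR H) (h₂ : rankOne v₂ w₂ ∈ FR H),
        T ⟨rankOne v₁ w₁, h₁⟩ ⟨rankOne v₂ w₂, h₂⟩ = f v₂ w₁ • rankOne v₁ w₂ := by
  have hee : inner ℂ e e = (1 : ℂ) := by simp [inner_self_eq_norm_sq_to_K, he]
  let R : H → H → FR H := fun v w => ⟨rankOne v w, rankOne_mem v w⟩
  have R1 : ∀ v v' w, R (v + v') w = R v w + R v' w := fun v v' w =>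
    Subtype.ext (by ext; simp [R, rankOne_apply])
  have R2 : ∀ (c : ℂ) v w, R (c • v) w = c • R v w := fun c v w =>
    Subtype.ext (by ext; simp [R, rankOne_apply, smul_smul, mul_comm])
  have R3 : ∀ v w w', R v (w + w') = R v w + R v w' := fun v w w' =>
    Subtype.ext (by ext; simp [R, rankOne_apply, add_smul])
  have R4 : ∀ (c : ℂ) v w, R v (c • w) = starRingEnd ℂ c • R v w := fun c v w =>
    Subtype.ext (by ext; simp [R, rankOne_apply, smul_smul, mul_comm])
  refine ⟨fun v w => inner ℂ e (T (R e w) (R v e) e), ⟨?_, ?_, ?_, ?_⟩, ?_⟩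
  · intro v v' w
    simp [R1]
  · intro c v w
    simp [R2]
  · intro v w w'
    simp [R3]
  · intro c v w
    simp [R4]
  · intro v₁ w₁ v₂ w₂ h₁ h₂
    have h := sandwich T hT (R e w₁) (R v₂ e) v₁ w₂ e e
    simp only [R, adjoint_rankOne_apply, rankOne_apply, hee, one_smul] at h
    exact h

/-- the quasi-centralizers of `F(H)` correspond bijectively to sesquilinear
forms `f : H × H → ℂ`, via `T(v₁ ⊗ w̄₁, v₂ ⊗ w̄₂) = f(v₂, w₁) · (v₁ ⊗ w̄₂)`. -/
theorem stmt_10 :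
    (∀ T : FR H →ₗ[ℂ] FR H →ₗ[ℂ] (H →L[ℂ] H), IsQuasiCentralizer T →
      ∃! f : H → H → ℂ, IsSesquilinear f ∧
        ∀ (v₁ w₁ v₂ w₂ : H) (h₁ : rankOne v₁ w₁ ∈ FR H) (h₂ : rankOne v₂ w₂ ∈ FR H),
          T ⟨rankOne v₁ w₁, h₁⟩ ⟨rankOne v₂ w₂, h₂⟩ = f v₂ w₁ • rankOne v₁ w₂) ∧
    (∀ f : H → H → ℂ, IsSesquilinear f →
      ∃! T : FR H →ₗ[ℂ] FR H →ₗ[ℂ] (H →L[ℂ] H), IsQuasiCentralizer T ∧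
        ∀ (v₁ w₁ v₂ w₂ : H) (h₁ : rankOne v₁ w₁ ∈ FR H) (h₂ : rankOne v₂ w₂ ∈ FR H),
          T ⟨rankOne v₁ w₁, h₁⟩ ⟨rankOne v₂ w₂, h₂⟩ = f v₂ w₁ • rankOne v₁ w₂) := by
  constructor
  · intro T hT
    rcases subsingleton_or_nontrivial H with hH | hH
    · refine ⟨fun _ _ => 0, ⟨⟨by simp, by simp, by simp, by simp⟩, ?_⟩, ?_⟩
      · intros
        exact Subsingleton.elim _ _
      · rintro f ⟨hf, -⟩
        funext v w
        have h := hf.2.1 0 v w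
        rw [zero_smul, zero_mul] at h
        rwa [Subsingleton.elim v 0]
    · obtain ⟨e, he⟩ := exists_norm_eq H zero_le_one
      obtain ⟨f, hf, hTf⟩ := exists_form T hT e he
      refine ⟨f, ⟨hf, hTf⟩, ?_⟩
      rintro g ⟨-, hTg⟩
      funext v w
      have h := (hTg e w v e (rankOne_mem _ _) (rankOne_mem _ _)).symm.trans
        (hTf e w v e (rankOne_mem _ _) (rankOne_mem _ _))
      have h' := congrArg (fun S : H →L[ℂ] H => inner ℂ e (S e)) h
      simpa [rankOne_apply, inner_smul_right, inner_self_eq_norm_sq_to_K, he] using h'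
  · intro f hf
    choose S hS using exists_op f hf
    have hf' := hf
    obtain ⟨f1, f2, f3, f4⟩ := hf'
    let T : FR H →ₗ[ℂ] FR H →ₗ[ℂ] (H →L[ℂ] H) := LinearMap.mk₂ ℂ S
      (fun x x' y => by
        ext u
        refine ext_inner_left ℂ fun z => ?_
        simp [hS, inner_add_right, f3])
      (fun c x y => by
        ext u
        refine ext_inner_left ℂ fun z => ?_
        simp [hS, inner_smul_right, map_smulₛₗ _ c (x : H →L[ℂ] H), f4])
      (fun x y y' => by
        ext u
        refine ext_inner_left ℂ fun z => ?_
        simp [hS, inner_add_right, f1])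
      (fun c x y => by
        ext u
        refine ext_inner_left ℂ fun z => ?_
        simp [hS, inner_smul_right, f2])
    have hT : ∀ x y z u, inner ℂ z (T x y u) =
        f ((y : H →L[ℂ] H) u) (ContinuousLinearMap.adjoint (x : H →L[ℂ] H) z) := hS
    refine ⟨T, ⟨⟨?_, ?_, ?_⟩, ?_⟩, ?_⟩
    · intro x y
      have hx : FiniteDimensional ℂ (LinearMap.range ((x : H →L[ℂ] H) : H →ₗ[ℂ] H)) := x.2
      change FiniteDimensional ℂ _
      refine Submodule.finiteDimensional_of_le
        (S₂ := LinearMap.range ((x : H →L[ℂ] H) : H →ₗ[ℂ] H)) ?_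
      rintro _ ⟨u, rfl⟩
      -- The finite-dimensional range of `x` is its own double orthogonal complement, and `x*`
      -- vanishes on its orthogonal complement.
      rw [← Submodule.orthogonal_orthogonal (LinearMap.range ((x : H →L[ℂ] H) : H →ₗ[ℂ] H)),
        Submodule.mem_orthogonal]
      intro z hz
      have hz0 : ContinuousLinearMap.adjoint (x : H →L[ℂ] H) z = 0 := by
        refine ext_inner_left ℂ fun t => ?_
        rw [ContinuousLinearMap.adjoint_inner_right, inner_zero_right]
        exact (Submodule.mem_orthogonal _ _).1 hz _ ⟨t, rfl⟩
      have h := f4 0 ((y : H →L[ℂ] H) u) 0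
      rw [zero_smul, map_zero, zero_mul] at h
      exact (hT x y z u).trans (by rw [hz0, h])
    · intro b₁ b₂ b₃ h
      ext u
      refine ext_inner_left ℂ fun z => ?_
      change _ = inner ℂ z ((b₁ : H →L[ℂ] H) (T b₂ b₃ u))
      rw [hT, ← ContinuousLinearMap.adjoint_inner_left, hT]
      simp only [ContinuousLinearMap.mul_def, ContinuousLinearMap.adjoint_comp,
        ContinuousLinearMap.comp_apply]
    · intro b₁ b₂ b₃ h
      ext u
      refine ext_inner_left ℂ fun z => ?_
      change _ = inner ℂ z (T b₁ b₂ ((b₃ : H →L[ℂ] H) u))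
      rw [hT, hT]
      rfl
    · intro v₁ w₁ v₂ w₂ h₁ h₂
      ext u
      refine ext_inner_left ℂ fun z => ?_
      rw [hT]
      simp only [adjoint_rankOne_apply, rankOne_apply, f2, f4, smul_apply,
        inner_smul_right, inner_conj_symm]
      ring
    · rintro T' ⟨hq, hT'⟩
      refine LinearMap.ext fun x => LinearMap.ext fun y => ?_
      ext u
      refine ext_inner_left ℂ fun z => ?_
      rw [hT, inner_apply_eq f hf T' hq hT']
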